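/- There is an absolute constant C > 0 with the following property: for all integers n > k ≥ 1, every log-concave upper semicontinuous probability density f : ℝⁿ → [0,∞) in isotropic position, and every k-dimensional linear subspace H ⊆ ℝⁿ, one has ∫_H f dλ_H ≥ C^{n−k}. -/

import Mathlib

open MeasureTheory

noncomputable section

/-- `ℝⁿ` with its Euclidean structure. -/
abbrev Eucl (n : ℕ) := EuclideanSpace ℝ (Fin n)

/-- `f : ℝⁿ → [0,∞)` is log-concave:
`f(tx+(1−t)y) ≥ f(x)^t · f(y)^(1−t)` for all `x, y` and `t ∈ (0,1)`. -/
def IsLogConcave {n : ℕ} (f : Eucl n → ℝ) : Prop :=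
  ∀ x y : Eucl n, ∀ t : ℝ, 0 < t → t < 1 →
    f x ^ t * f y ^ (1 - t) ≤ f (t • x + (1 - t) • y)

/-- The class `Q₀ⁿ`: nonnegative, log-concave, upper semicontinuous, integrable
functions with positive integral. -/
def MemQ0 {n : ℕ} (f : Eucl n → ℝ) : Prop :=
  (∀ x, 0 ≤ f x) ∧ IsLogConcave f ∧ UpperSemicontinuous f ∧
    Integrable f ∧ 0 < ∫ x, f x

/-- `‖f‖_∞ = sup f`. -/
def supNorm {n : ℕ} (f : Eucl n → ℝ) : ℝ := ⨆ x, f x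

/-- `‖f‖_p = (∫ f^p)^(1/p)`. -/
def lpNorm {n : ℕ} (p : ℝ) (f : Eucl n → ℝ) : ℝ := (∫ x, f x ^ p) ^ (1 / p)

/-- `‖P_H f‖_{L¹(H)} = ∫_H sup_{z ∈ H⊥} f(y+z) dλ_H(y)`, the `L¹(H)`-norm of the
projection of `f` onto the subspace `H` (with the Lebesgue measure on `H` induced
by the Euclidean structure). -/
def projL1 {n : ℕ} (f : Eucl n → ℝ) (H : Submodule ℝ (Eucl n)) : ℝ :=
  ∫ y : H, ⨆ z : Hᗮ, f ((y : Eucl n) + (z : Eucl n))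

/-- `‖S_H f‖_{L¹(H)} = ∫_H f dλ_H`, the integral of the section `f|_H`. -/
def sectL1 {n : ℕ} (f : Eucl n → ℝ) (H : Submodule ℝ (Eucl n)) : ℝ :=
  ∫ y : H, f (y : Eucl n)

open scoped ENNReal Pointwise

lemma bm_compact (K L S : Set ℝ) (hK : IsCompact K) (hL : IsCompact L) (hKn : K.Nonempty)
    (hLn : L.Nonempty) (h : ∀ x ∈ K, ∀ y ∈ L, x + y ∈ S) : volume K + volume L ≤ volume S := by
  obtain ⟨a, haK, ha⟩ := hK.exists_isGreatest hKn
  obtain ⟨b, hbL, hb⟩ := hL.exists_isLeast hLn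
  have h1 : volume K = volume (Set.image (fun x => b + x) K) := by simp
  have h2 : volume L = volume (Set.image (fun x => a + x) L) := by simp
  rw [h1, h2, ← measure_union₀]
  · apply measure_mono
    rintro _ (⟨x, hx, rfl⟩ | ⟨x, hx, rfl⟩)
    · have := h x hx b hbL
      simpa [add_comm] using this
    · exact h a haK x hx
  · exact (hL.image (by fun_prop)).measurableSet.nullMeasurableSet
  · refine measure_mono_null (t := {a + b}) ?_ (by simp)
    rintro z ⟨⟨x, hx, rfl⟩, ⟨y, hy, hxy⟩⟩
    have := ha hx
    have := hb hy
    simp only at hxy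
    simp only [Set.mem_singleton_iff]
    linarith

lemma bm_one (A B S : Set ℝ) (hA : MeasurableSet A) (hB : MeasurableSet B) (hAn : A.Nonempty)
    (hBn : B.Nonempty) (h : ∀ x ∈ A, ∀ y ∈ B, x + y ∈ S) : volume A + volume B ≤ volume S := by
  obtain ⟨a, ha⟩ := hAn
  obtain ⟨b, hb⟩ := hBn
  rw [hA.measure_eq_iSup_isCompact, hB.measure_eq_iSup_isCompact]
  simp only [iSup_and', iSup_subtype']
  have e : ∀ A : Set ℝ, Nonempty {K : Set ℝ // K ⊆ A ∧ IsCompact K} :=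
    fun A => ⟨⟨∅, by simp, by simp⟩⟩
  have := e A
  have := e B
  refine ENNReal.iSup_add_iSup_le ?_
  rintro ⟨K, hK, hKc⟩ ⟨L, hL, hLc⟩
  calc volume K + volume L ≤ volume (insert a K) + volume (insert b L) := by
        gcongr <;> simp
    _ ≤ volume S := by
        refine bm_compact _ _ _ (hKc.insert a) (hLc.insert b) (by simp) (by simp) ?_
        intro x hx y hy
        exact h x (Set.insert_subset ha hK hx) y (Set.insert_subset hb hL hy)

lemma pl_normalized (F G K : ℝ → ℝ) (t : ℝ) (ht : 0 < t) (ht1 : t < 1)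
    (hF : Measurable F) (hG : Measurable G) (hK : Measurable K)
    (hF0 : ∀ x, 0 ≤ F x) (hG0 : ∀ x, 0 ≤ G x) (hK0 : ∀ x, 0 ≤ K x)
    (hF1 : ∀ x, F x ≤ 1) (hG1 : ∀ x, G x ≤ 1)
    (hFs : ∀ s < 1, ∃ x, s < F x) (hGs : ∀ s < 1, ∃ x, s < G x)
    (h : ∀ x y, F x ^ t * G y ^ (1 - t) ≤ K (t * x + (1 - t) * y)) :
    ENNReal.ofReal t * (∫⁻ x, ENNReal.ofReal (F x)) +
      ENNReal.ofReal (1 - t) * (∫⁻ x, ENNReal.ofReal (G x)) ≤ ∫⁻ x, ENNReal.ofReal (K x) := by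
  rw [lintegral_eq_lintegral_meas_lt _ (Filter.Eventually.of_forall hF0) hF.aemeasurable,
    lintegral_eq_lintegral_meas_lt _ (Filter.Eventually.of_forall hG0) hG.aemeasurable,
    lintegral_eq_lintegral_meas_lt _ (Filter.Eventually.of_forall hK0) hK.aemeasurable]
  have mF : Measurable fun s : ℝ => volume {x | s < F x} :=
    Antitone.measurable fun s s' hs => measure_mono fun x hx => lt_of_le_of_lt hs hx
  have mG : Measurable fun s : ℝ => volume {x | s < G x} :=
    Antitone.measurable fun s s' hs => measure_mono fun x hx => lt_of_le_of_lt hs hx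
  rw [← lintegral_const_mul _ mF, ← lintegral_const_mul _ mG, ← lintegral_add_left (mF.const_mul _)]
  refine setLIntegral_mono' measurableSet_Ioi ?_
  intro s hs
  simp only [Set.mem_Ioi] at hs
  by_cases hs1 : s < 1
  · have e1 : ENNReal.ofReal t * volume {x | s < F x} = volume (t • {x | s < F x}) := by
      rw [Measure.addHaar_smul]; simp [abs_of_pos ht]
    have e2 : ENNReal.ofReal (1 - t) * volume {x | s < G x} = volume ((1 - t) • {x | s < G x}) := by
      rw [Measure.addHaar_smul]; simp [abs_of_pos (sub_pos.2 ht1)]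
    rw [e1, e2]
    refine bm_one _ _ _ ?_ ?_ ?_ ?_ ?_
    · exact (measurableSet_lt measurable_const hF).const_smul₀ t
    · exact (measurableSet_lt measurable_const hG).const_smul₀ _
    · exact Set.Nonempty.smul_set (hFs s hs1)
    · exact Set.Nonempty.smul_set (hGs s hs1)
    · rintro _ ⟨x, hx, rfl⟩ _ ⟨y, hy, rfl⟩
      simp only [Set.mem_ofPred_eq, smul_eq_mul] at hx hy ⊢
      refine lt_of_lt_of_le ?_ (h x y)
      calc s = s ^ t * s ^ (1 - t) := by rw [← Real.rpow_add hs]; simp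
        _ < _ := by
          have := Real.rpow_lt_rpow hs.le hx ht
          have := Real.rpow_lt_rpow hs.le hy (sub_pos.2 ht1)
          have := Real.rpow_pos_of_pos hs t
          have := Real.rpow_pos_of_pos hs (1 - t)
          gcongr
  · have e1 : {x | s < F x} = ∅ := by
      ext x; simp; linarith [hF1 x]
    have e2 : {x | s < G x} = ∅ := by
      ext x; simp; linarith [hG1 x]
    simp [e1, e2]

lemma amgm (t : ℝ) (ht : 0 < t) (ht1 : t < 1) (a b : ℝ≥0∞) :
    a ^ t * b ^ (1 - t) ≤ ENNReal.ofReal t * a + ENNReal.ofReal (1 - t) * b := by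
  have h1 : 0 < 1 - t := sub_pos.2 ht1
  rcases eq_or_ne a ∞ with rfl | ha
  · rw [ENNReal.mul_top (by simpa using ht)]; simp
  rcases eq_or_ne b ∞ with rfl | hb
  · rw [ENNReal.mul_top (by simpa using h1)]; simp
  have := Real.geom_mean_le_arith_mean2_weighted ht.le h1.le (ENNReal.toReal_nonneg (a := a))
    (ENNReal.toReal_nonneg (a := b)) (by ring)
  have := ENNReal.ofReal_le_ofReal this
  rw [ENNReal.ofReal_mul (by positivity), ENNReal.ofReal_add (by positivity) (by positivity),
    ENNReal.ofReal_mul ht.le, ENNReal.ofReal_mul h1.le, ← ENNReal.ofReal_rpow_of_nonneg (by simp) ht.le,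
    ← ENNReal.ofReal_rpow_of_nonneg (by simp) h1.le,
    ENNReal.ofReal_toReal ha, ENNReal.ofReal_toReal hb] at this
  exact this

lemma pl_bounded (f g h : ℝ → ℝ≥0∞) (t : ℝ) (ht : 0 < t) (ht1 : t < 1)
    (hf : Measurable f) (hg : Measurable g) (hh : Measurable h)
    (hfb : (⨆ x, f x) ≠ ∞) (hgb : (⨆ x, g x) ≠ ∞)
    (H : ∀ x y, f x ^ t * g y ^ (1 - t) ≤ h (t * x + (1 - t) * y)) :
    (∫⁻ x, f x) ^ t * (∫⁻ x, g x) ^ (1 - t) ≤ ∫⁻ x, h x := by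
  have h1 : 0 < 1 - t := sub_pos.2 ht1
  set a := ⨆ x, f x with ha
  set b := ⨆ x, g x with hb
  have fa : ∀ x, f x ≤ a := fun x => le_iSup f x
  have gb : ∀ x, g x ≤ b := fun x => le_iSup g x
  rcases eq_or_ne a 0 with h0 | ha0
  · have : ∀ x, f x = 0 := fun x => le_antisymm (h0 ▸ fa x) zero_le
    simp [this, ht]
  rcases eq_or_ne b 0 with h0 | hb0
  · have : ∀ x, g x = 0 := fun x => le_antisymm (h0 ▸ gb x) zero_le
    simp [this, h1]
  have at0 : a ^ t ≠ 0 := by simp [ha0, hfb]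
  have bt0 : b ^ (1 - t) ≠ 0 := by simp [hb0, hgb]
  have att : a ^ t ≠ ∞ := ENNReal.rpow_ne_top_of_nonneg ht.le hfb
  have btt : b ^ (1 - t) ≠ ∞ := ENNReal.rpow_ne_top_of_nonneg h1.le hgb
  set c := a ^ t * b ^ (1 - t) with hc
  have hc0 : c ≠ 0 := mul_ne_zero at0 bt0
  have hct : c ≠ ∞ := ENNReal.mul_ne_top att btt
  have key : ∀ u v : ℝ≥0∞, (a⁻¹ * u) ^ t * (b⁻¹ * v) ^ (1 - t) = c⁻¹ * (u ^ t * v ^ (1 - t)) := by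
    intro u v
    rw [ENNReal.mul_rpow_of_nonneg _ _ ht.le, ENNReal.mul_rpow_of_nonneg _ _ h1.le, hc,
      ENNReal.mul_inv (Or.inl at0) (Or.inl att), ENNReal.inv_rpow, ENNReal.inv_rpow]
    ring
  have le1 : ∀ (a u : ℝ≥0∞), a ≠ 0 → a ≠ ∞ → u ≤ a → a⁻¹ * u ≤ 1 := by
    intro a u h0 ht hu
    calc a⁻¹ * u ≤ a⁻¹ * a := by gcongr
      _ = 1 := ENNReal.inv_mul_cancel h0 ht
  have sup1 : ∀ (f : ℝ → ℝ≥0∞) (a : ℝ≥0∞), a = (⨆ x, f x) → a ≠ 0 → a ≠ ∞ → ∀ s < (1 : ℝ),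
      ∃ x, s < (a⁻¹ * f x).toReal := by
    intro f a ha h0 ht s hs
    have : ENNReal.ofReal s * a < ⨆ x, f x := by
      rw [← ha]
      calc ENNReal.ofReal s * a < 1 * a := by
            refine ENNReal.mul_lt_mul_left h0 ht ?_
            simpa using hs
        _ = a := one_mul a
    obtain ⟨x, hx⟩ := lt_iSup_iff.1 this
    refine ⟨x, ?_⟩
    have hle : f x ≤ a := ha ▸ le_iSup f x
    have hlt : ENNReal.ofReal s < a⁻¹ * f x := by
      rw [mul_comm, ← div_eq_mul_inv]
      exact (ENNReal.lt_div_iff_mul_lt (Or.inl h0) (Or.inl ht)).2 hx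
    have hne : a⁻¹ * f x ≠ ∞ := ne_top_of_le_ne_top ENNReal.one_ne_top (le1 a _ h0 ht hle)
    by_contra hcon
    have := ENNReal.ofReal_le_ofReal (not_lt.1 hcon)
    rw [ENNReal.ofReal_toReal hne] at this
    exact absurd hlt (not_lt.2 this)
  have P := pl_normalized (fun x => (a⁻¹ * f x).toReal) (fun x => (b⁻¹ * g x).toReal)
    (fun x => (min (c⁻¹ * h x) 1).toReal) t ht ht1 (by fun_prop) (by fun_prop) (by fun_prop)
    (fun _ => ENNReal.toReal_nonneg) (fun _ => ENNReal.toReal_nonneg)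
    (fun _ => ENNReal.toReal_nonneg)
    (fun x => ENNReal.toReal_le_of_le_ofReal (by simp) (by simpa using le1 a _ ha0 hfb (fa x)))
    (fun x => ENNReal.toReal_le_of_le_ofReal (by simp) (by simpa using le1 b _ hb0 hgb (gb x)))
    (sup1 f a ha ha0 hfb) (sup1 g b hb hb0 hgb) ?_
  · have r1 : ∀ x, ENNReal.ofReal (a⁻¹ * f x).toReal = a⁻¹ * f x := fun x =>
      ENNReal.ofReal_toReal (ne_top_of_le_ne_top ENNReal.one_ne_top (le1 a _ ha0 hfb (fa x)))
    have r2 : ∀ x, ENNReal.ofReal (b⁻¹ * g x).toReal = b⁻¹ * g x := fun x =>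
      ENNReal.ofReal_toReal (ne_top_of_le_ne_top ENNReal.one_ne_top (le1 b _ hb0 hgb (gb x)))
    have r3 : ∀ x, ENNReal.ofReal (min (c⁻¹ * h x) 1).toReal = min (c⁻¹ * h x) 1 := fun x =>
      ENNReal.ofReal_toReal (by simp)
    simp only [r1, r2, r3] at P
    rw [lintegral_const_mul _ hf, lintegral_const_mul _ hg] at P
    have Q := (amgm t ht ht1 _ _).trans P
    rw [key] at Q
    have R : ∫⁻ x, min (c⁻¹ * h x) 1 ≤ c⁻¹ * ∫⁻ x, h x := by
      rw [← lintegral_const_mul _ hh]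
      exact lintegral_mono fun x => min_le_left _ _
    have T := Q.trans R
    exact (ENNReal.mul_le_mul_iff_right (by simpa using hct) (by simpa using hc0)).1 T
  · intro x y
    rw [ENNReal.toReal_rpow, ENNReal.toReal_rpow, ← ENNReal.toReal_mul]
    refine ENNReal.toReal_mono (by simp) (le_min ?_ ?_)
    · rw [key]; gcongr; exact H x y
    · calc _ ≤ (1 : ℝ≥0∞) ^ t * 1 ^ (1 - t) := by
            gcongr
            · exact le1 a _ ha0 hfb (fa x)
            · exact le1 b _ hb0 hgb (gb y)
        _ = 1 := by simp

lemma pl_one (f g h : ℝ → ℝ≥0∞) (t : ℝ) (ht : 0 < t) (ht1 : t < 1)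
    (hf : Measurable f) (hg : Measurable g) (hh : Measurable h)
    (H : ∀ x y, f x ^ t * g y ^ (1 - t) ≤ h (t * x + (1 - t) * y)) :
    (∫⁻ x, f x) ^ t * (∫⁻ x, g x) ^ (1 - t) ≤ ∫⁻ x, h x := by
  have h1 : 0 < 1 - t := sub_pos.2 ht1
  have B : ∀ N : ℕ, (∫⁻ x, min (f x) N) ^ t * (∫⁻ x, min (g x) N) ^ (1 - t) ≤ ∫⁻ x, h x := by
    intro N
    have bd : ∀ f : ℝ → ℝ≥0∞, (⨆ x, min (f x) (N : ℝ≥0∞)) ≠ ∞ := fun f =>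
      ne_top_of_le_ne_top (ENNReal.natCast_ne_top N) (iSup_le fun x => min_le_right _ _)
    refine pl_bounded _ _ h t ht ht1 (by fun_prop) (by fun_prop) hh (bd f) (bd g) ?_
    intro x y
    refine le_trans ?_ (H x y)
    gcongr <;> exact min_le_left _ _
  have lim : ∀ f : ℝ → ℝ≥0∞, Measurable f → Filter.Tendsto (fun N : ℕ => ∫⁻ x, min (f x) N)
      Filter.atTop (nhds (∫⁻ x, f x)) := by
    intro f hf
    refine lintegral_tendsto_of_tendsto_of_monotone (fun N => by fun_prop) ?_ ?_
    · refine Filter.Eventually.of_forall fun x N M hNM => ?_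
      simp only
      gcongr
    · refine Filter.Eventually.of_forall fun x => ?_
      have := (tendsto_const_nhds (x := f x)).min ENNReal.tendsto_nat_nhds_top
      simpa using this
  have mono : ∀ f : ℝ → ℝ≥0∞, Monotone (fun N : ℕ => ∫⁻ x, min (f x) N) := by
    intro f N M hNM
    refine lintegral_mono fun x => ?_
    simp only
    gcongr
  have e : ∀ f : ℝ → ℝ≥0∞, Measurable f → ∀ p : ℝ, 0 < p →
      (∫⁻ x, f x) ^ p = ⨆ N : ℕ, (∫⁻ x, min (f x) N) ^ p := by
    intro f hf p hp
    rw [← (iSup_eq_of_tendsto (mono f) (lim f hf))]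
    exact (ENNReal.orderIsoRpow p hp).map_iSup _
  rw [e f hf t ht, e g hg _ h1]
  simp only [ENNReal.iSup_mul, ENNReal.mul_iSup]
  refine iSup_le fun i => iSup_le fun j => ?_
  refine le_trans ?_ (B (max i j))
  gcongr <;> simp

/-- log-concavity for extended nonnegative functions -/
def LCE {E : Type*} [AddCommGroup E] [Module ℝ E] (f : E → ℝ≥0∞) : Prop :=
  ∀ x y : E, ∀ t : ℝ, 0 < t → t < 1 → f x ^ t * f y ^ (1 - t) ≤ f (t • x + (1 - t) • y)

lemma LCE.marginal_one {E : Type*} [AddCommGroup E] [Module ℝ E] [MeasurableSpace E]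
    (f : E × ℝ → ℝ≥0∞) (hf : Measurable f) (h : LCE f) : LCE (fun x => ∫⁻ r : ℝ, f (x, r)) := by
  intro x y t ht ht1
  refine pl_one _ _ _ t ht ht1 (by fun_prop) (by fun_prop) (by fun_prop) ?_
  intro u v
  exact h (x, u) (y, v) t ht ht1

lemma LCE.marginal_pi {E : Type*} [AddCommGroup E] [Module ℝ E] [MeasurableSpace E] (k : ℕ)
    (f : E × (Fin k → ℝ) → ℝ≥0∞) (hf : Measurable f) (h : LCE f) :
    LCE (fun x => ∫⁻ r : Fin k → ℝ, f (x, r)) := by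
  induction k with
  | zero =>
    intro x y t ht ht1
    simp only [lintegral_unique]
    have e : volume (Set.univ : Set (Fin 0 → ℝ)) = 1 := by
      rw [volume_pi, Measure.pi_univ]; simp
    simp only [e, mul_one]
    refine (h (x, _) (y, _) t ht ht1).trans (le_of_eq ?_)
    congr 1
    exact Prod.ext rfl (Subsingleton.elim _ _)
  | succ k ih =>
    have e : ∀ x, ∫⁻ r : Fin (k+1) → ℝ, f (x, r) =
        ∫⁻ w : Fin k → ℝ, ∫⁻ r : ℝ, f (x, Fin.cons r w) := by
      intro x
      rw [← (volume_preserving_piFinSuccAbove (fun _ : Fin (k+1) => ℝ) 0).symm.lintegral_comp_emb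
        (MeasurableEquiv.measurableEmbedding _)]
      rw [Measure.volume_eq_prod, lintegral_prod_symm _ (by fun_prop)]
      simp [Fin.consEquiv]
    simp only [e]
    have mc : Measurable fun q : (E × (Fin k → ℝ)) × ℝ =>
        (q.1.1, (Fin.cons q.2 q.1.2 : Fin (k+1) → ℝ)) := by
      refine Measurable.prodMk (by fun_prop) (measurable_pi_iff.2 fun i => ?_)
      refine Fin.cases ?_ (fun j => ?_) i
      · simpa using measurable_snd
      · simp only [Fin.cons_succ]; fun_prop
    have mf := hf.comp mc
    refine ih (fun p => ∫⁻ r : ℝ, f (p.1, Fin.cons r p.2)) ?_ ?_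
    · exact Measurable.lintegral_prod_right' (f := fun q : (E × (Fin k → ℝ)) × ℝ =>
        f (q.1.1, Fin.cons q.2 q.1.2)) mf
    · refine LCE.marginal_one (fun q : (E × (Fin k → ℝ)) × ℝ =>
        f (q.1.1, Fin.cons q.2 q.1.2)) mf ?_
      intro x y t ht ht1
      refine (h _ _ t ht ht1).trans (le_of_eq ?_)
      congr 1
      refine Prod.ext rfl ?_
      funext i
      refine Fin.cases ?_ (fun j => ?_) i <;> simp

lemma LCE.marginal {E V : Type*} [AddCommGroup E] [Module ℝ E] [MeasurableSpace E]
    [NormedAddCommGroup V] [InnerProductSpace ℝ V] [FiniteDimensional ℝ V] [MeasurableSpace V]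
    [BorelSpace V]
    (f : E × V → ℝ≥0∞) (hf : Measurable f) (h : LCE f) :
    LCE (fun x => ∫⁻ r : V, f (x, r)) := by
  let b := stdOrthonormalBasis ℝ V
  have mp := (b.measurePreserving_repr_symm).comp
    (EuclideanSpace.volume_preserving_symm_measurableEquiv_toLp (Fin (Module.finrank ℝ V))).symm
  have e : ∀ x, ∫⁻ r : V, f (x, r) = ∫⁻ r : Fin (Module.finrank ℝ V) → ℝ,
      f (x, b.repr.symm (WithLp.toLp 2 r)) := by
    intro x
    rw [← mp.lintegral_comp (by fun_prop)]
    rfl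
  simp only [e]
  have mm := mp.measurable
  refine LCE.marginal_pi _ (fun p => f (p.1, b.repr.symm (WithLp.toLp 2 p.2))) ?_ ?_
  · exact hf.comp (measurable_fst.prodMk (mm.comp measurable_snd))
  · intro x y t ht ht1
    refine (h _ _ t ht ht1).trans (le_of_eq ?_)
    congr 1
    refine Prod.ext rfl ?_
    simp

lemma supergrad {V : Type*} [NormedAddCommGroup V] [NormedSpace ℝ V] [FiniteDimensional ℝ V]
    (U : Set V) (hU : IsOpen U) (φ : V → ℝ) (hφ : ConcaveOn ℝ U φ) (h0 : (0 : V) ∈ U) :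
    ∃ ℓ : V →L[ℝ] ℝ, ∀ y ∈ U, φ y ≤ φ 0 + ℓ y := by
  have hc : ContinuousOn φ U := hφ.continuousOn hU
  have hopen : IsOpen {p : V × ℝ | p.1 ∈ U ∧ p.2 < φ p.1} := by
    have h1 : IsOpen (U ×ˢ (Set.univ : Set ℝ)) := hU.prod isOpen_univ
    have h2 : ContinuousOn (fun p : V × ℝ => φ p.1 - p.2) (U ×ˢ (Set.univ : Set ℝ)) :=
      (hc.comp continuousOn_fst fun p hp => hp.1).sub continuousOn_snd
    convert h2.isOpen_inter_preimage h1 (isOpen_Ioi (a := (0 : ℝ))) using 1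
    ext p
    simp
  have hconv := hφ.convex_strict_hypograph
  obtain ⟨L, hL⟩ := geometric_hahn_banach_open_point (x := ((0 : V), φ 0)) hconv hopen
    (by simp)
  have dec : ∀ y s, L (y, s) = L (y, 0) + s * L (0, 1) := by
    intro y s
    have : ((y, s) : V × ℝ) = (y, 0) + s • (0, 1) := by simp
    rw [this, map_add, map_smul, smul_eq_mul]
  set c := L (0, 1) with hcdef
  have hcpos : 0 < c := by
    have := hL (0, φ 0 - 1) ⟨h0, by simp⟩
    rw [dec, dec 0 (φ 0)] at this
    linarith
  refine ⟨-(c⁻¹ • L.comp (ContinuousLinearMap.inl ℝ V ℝ)), fun y hy => ?_⟩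
  have key : L (y, 0) + φ y * c ≤ φ 0 * c := by
    refine le_of_forall_pos_lt_add fun ε hε => ?_
    have := hL (y, φ y - ε / c) ⟨hy, by simp; positivity⟩
    rw [dec, dec 0 (φ 0)] at this
    have e0 : L ((0 : V), (0 : ℝ)) = 0 := map_zero L
    have e1 : ε / c * c = ε := by field_simp
    nlinarith
  have e : (-(c⁻¹ • L.comp (ContinuousLinearMap.inl ℝ V ℝ))) y = -(c⁻¹ * L (y, 0)) := by simp
  rw [e]
  have : c⁻¹ * (L (y, 0) + φ y * c) ≤ c⁻¹ * (φ 0 * c) := by gcongr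
  have e2 : c⁻¹ * (L (y, 0) + φ y * c) = c⁻¹ * L (y, 0) + φ y := by field_simp
  have e3 : c⁻¹ * (φ 0 * c) = φ 0 := by field_simp
  linarith

section core
variable {V : Type*} [NormedAddCommGroup V] [InnerProductSpace ℝ V] [FiniteDimensional ℝ V]
  [MeasurableSpace V] [BorelSpace V]

lemma LCE.convex_supp {g : V → ℝ≥0∞} (hg : LCE g) : Convex ℝ {y | g y ≠ 0} := by
  rw [convex_iff_forall_pos]
  intro x hx y hy a b ha hb hab
  have := hg x y a ha (by linarith)
  obtain rfl : b = 1 - a := by linarith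
  have p : g x ^ a * g y ^ (1 - a) ≠ 0 := by
    refine mul_ne_zero ?_ ?_
    · intro h0
      rw [ENNReal.rpow_eq_zero_iff_of_pos ha] at h0
      exact hx h0
    · intro h0
      rw [ENNReal.rpow_eq_zero_iff_of_pos hb] at h0
      exact hy h0
  exact fun h0 => p (le_antisymm (this.trans h0.le) zero_le)

lemma LCE.finite {g : V → ℝ≥0∞} (hgm : Measurable g) (hg : LCE g) (h1 : ∫⁻ y, g y = 1) (x : V) :
    g x ≠ ∞ := by
  intro hx
  have hS : volume {y | g y ≠ 0} ≠ 0 := by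
    intro h0
    have : g =ᵐ[volume] 0 := h0
    rw [lintegral_congr_ae this] at h1
    simp at h1
  have hT : volume {y | g y = ∞} = 0 := by
    have := ae_lt_top hgm (by rw [h1]; simp)
    rw [ae_iff] at this
    simpa using this
  have hsub : Set.image (AffineMap.homothety x (1/2 : ℝ)) {y | g y ≠ 0} ⊆ {y | g y = ∞} := by
    rintro _ ⟨y, hy, rfl⟩
    have := hg x y (1/2) (by norm_num) (by norm_num)
    have e : AffineMap.homothety x (1/2 : ℝ) y = (1/2 : ℝ) • x + (1 - 1/2 : ℝ) • y := by
      rw [AffineMap.homothety_apply]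
      simp only [vsub_eq_sub, vadd_eq_add]
      module
    simp only [Set.mem_ofPred_eq] at hy ⊢
    rw [e]
    rw [hx, ENNReal.top_rpow_of_pos (by norm_num), ENNReal.top_mul] at this
    · exact top_le_iff.1 this
    · intro h0
      rw [ENNReal.rpow_eq_zero_iff_of_pos (by norm_num)] at h0
      exact hy h0
  have := measure_mono_null hsub hT
  rw [Measure.addHaar_image_homothety] at this
  simp [hS] at this

lemma core (g : V → ℝ≥0∞) (hgm : Measurable g) (hg : LCE g) (ν : Measure V)
    [IsProbabilityMeasure ν] (hν : ν = volume.withDensity g)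
    (hi : Integrable (fun y => ‖y‖ ^ 2) ν) (hli : ∀ ℓ : V →L[ℝ] ℝ, Integrable (fun y => ℓ y) ν)
    (h0 : ∀ ℓ : V →L[ℝ] ℝ, ∫ y, ℓ y ∂ν = 0) :
    g 0 ≠ ∞ ∧ Real.exp (- Real.pi * ∫ y, ‖y‖ ^ 2 ∂ν) ≤ (g 0).toReal := by
  have hone : ∫⁻ y, g y = 1 := by
    have : ν Set.univ = 1 := measure_univ
    rw [hν, withDensity_apply _ MeasurableSet.univ] at this
    simpa using this
  have fin : ∀ x, g x ≠ ∞ := fun x => LCE.finite hgm hg hone x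
  refine ⟨fin 0, ?_⟩
  have hac : ν ≪ volume := hν ▸ withDensity_absolutelyContinuous _ _
  set S := {y | g y ≠ 0} with hS
  have Sconv : Convex ℝ S := hg.convex_supp
  have aeS : ∀ᵐ y ∂ν, y ∈ S := by
    rw [ae_iff, hν, withDensity_apply]
    · have : {a | a ∉ S} = Set.preimage g {0} := by ext; simp [hS]
      rw [this]
      rw [setLIntegral_congr_fun (g := fun _ => 0) (hgm (measurableSet_singleton 0))]
      · simp
      · intro x hx; exact hx
    · have : {a | a ∉ S} = Set.preimage g {0} := by ext; simp [hS]
      rw [this]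
      exact hgm (measurableSet_singleton 0)
  have aeI : ∀ᵐ y ∂ν, y ∈ interior S := by
    have hf : ∀ᵐ y ∂ν, y ∉ frontier S := hac.ae_le (measure_eq_zero_iff_ae_notMem.1 (Sconv.addHaar_frontier volume))
    filter_upwards [hf, aeS] with y h1 h2
    by_contra h3
    exact h1 ⟨subset_closure h2, h3⟩
  have zI : (0 : V) ∈ interior S := by
    by_contra hn
    obtain ⟨ℓ, hℓ⟩ := geometric_hahn_banach_open_point Sconv.interior isOpen_interior hn
    have hpos : ∀ᵐ y ∂ν, ℓ y < 0 := by
      filter_upwards [aeI] with y hy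
      simpa using hℓ y hy
    have e := integral_eq_zero_iff_of_nonneg_ae (μ := ν) (f := fun y => (-ℓ) y) ?_ (hli _)
    · have := e.1 (h0 _)
      obtain ⟨y, hy⟩ := (hpos.and this).exists
      simp at hy
      linarith [hy.1, hy.2]
    · filter_upwards [hpos] with y hy
      simp [hy.le]
  have posI : ∀ y ∈ interior S, 0 < (g y).toReal := fun y hy =>
    ENNReal.toReal_pos (interior_subset hy) (fin y)
  have conc : ConcaveOn ℝ (interior S) (fun y => Real.log (g y).toReal) := by
    rw [concaveOn_iff_forall_pos]
    refine ⟨Sconv.interior, ?_⟩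
    intro x hx y hy a b ha hb hab
    obtain rfl : b = 1 - a := by linarith
    have px := posI x hx
    have py := posI y hy
    have := ENNReal.toReal_mono (fin _) (hg x y a ha (by linarith))
    rw [ENNReal.toReal_mul, ← ENNReal.toReal_rpow, ← ENNReal.toReal_rpow] at this
    have := Real.log_le_log (by positivity) this
    rw [Real.log_mul (by positivity) (by positivity), Real.log_rpow px, Real.log_rpow py] at this
    simpa using this
  obtain ⟨ℓ, hℓ⟩ := supergrad (interior S) isOpen_interior _ conc zI
  set q : V → ℝ≥0∞ := fun y => ENNReal.ofReal (Real.exp (-Real.pi * ‖y‖ ^ 2)) / g y with hq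
  have qm : Measurable q := by fun_prop
  have qint : ∫⁻ y, q y ∂ν ≤ 1 := by
    rw [hν, lintegral_withDensity_eq_lintegral_mul _ hgm qm]
    have gint := GaussianFourier.integral_rexp_neg_mul_sq_norm (V := V) Real.pi_pos
    rw [div_self Real.pi_ne_zero, Real.one_rpow] at gint
    have gi : Integrable (fun y : V => Real.exp (-Real.pi * ‖y‖ ^ 2)) :=
      Integrable.of_integral_ne_zero (by rw [gint]; simp)
    calc _ ≤ ∫⁻ y : V, ENNReal.ofReal (Real.exp (-Real.pi * ‖y‖ ^ 2)) :=
          lintegral_mono fun y => by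
            simp only [Pi.mul_apply, hq]
            exact ENNReal.mul_div_le
      _ = 1 := by
        rw [← ofReal_integral_eq_lintegral_ofReal gi (Filter.Eventually.of_forall fun y => by positivity), gint]
        simp
  have qi : Integrable (fun y => (q y).toReal) ν :=
    integrable_toReal_of_lintegral_ne_top qm.aemeasurable (ne_top_of_le_ne_top ENNReal.one_ne_top qint)
  have qle : ∫ y, (q y).toReal ∂ν ≤ 1 := by
    rw [integral_toReal qm.aemeasurable (ae_lt_top qm (ne_top_of_le_ne_top ENNReal.one_ne_top qint))]
    exact ENNReal.toReal_le_of_le_ofReal (by simp) (by simpa using qint)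
  have pw : ∀ᵐ y ∂ν, -Real.pi * ‖y‖ ^ 2 - Real.log (g 0).toReal - ℓ y ≤ (q y).toReal - 1 := by
    filter_upwards [aeI] with y hy
    have py := posI y hy
    have h1 := hℓ y hy
    have e : (q y).toReal = Real.exp (-Real.pi * ‖y‖ ^ 2) / (g y).toReal := by
      simp only [hq]
      rw [ENNReal.toReal_div, ENNReal.toReal_ofReal (by positivity)]
    have h2 := Real.log_le_sub_one_of_pos (x := (q y).toReal) (by rw [e]; positivity)
    have h3 : Real.log (q y).toReal = -Real.pi * ‖y‖ ^ 2 - Real.log (g y).toReal := by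
      rw [e, Real.log_div (by positivity) (by positivity), Real.log_exp]
    linarith
  have hi1 : Integrable (fun y => -Real.pi * ‖y‖ ^ 2 - Real.log (g 0).toReal) ν :=
    (hi.const_mul (-Real.pi)).sub (integrable_const (Real.log (g 0).toReal))
  have mono := integral_mono_ae (hi1.sub (hli ℓ))
    (qi.sub (integrable_const 1)) pw
  simp only [Pi.sub_apply] at mono
  rw [integral_sub hi1 (hli ℓ),
    integral_sub (hi.const_mul (-Real.pi)) (integrable_const _), integral_sub qi (integrable_const _),
    h0, integral_const_mul] at mono
  simp only [integral_const, probReal_univ, smul_eq_mul, one_mul] at mono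
  rw [← Real.le_log_iff_exp_le (posI 0 zI)]
  linarith

end core

lemma marg_density {n : ℕ} (F : Eucl n → ℝ≥0∞) (hF : Measurable F) (H : Submodule ℝ (Eucl n)) :
    (volume.withDensity F).map (fun x => Hᗮ.orthogonalProjectionOnto x) =
      (volume : Measure Hᗮ).withDensity (fun y => ∫⁻ x : H, F ((x : Eucl n) + (y : Eucl n))) := by
  have mP : Measurable (fun x => Hᗮ.orthogonalProjectionOnto x) := by fun_prop
  have mp : MeasurePreserving (fun p : H × Hᗮ => (p.1 : Eucl n) + (p.2 : Eucl n)) := by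
    have := H.orthogonalDecomposition.symm.measurePreserving.comp
      (WithLp.volume_preserving_toLp H Hᗮ)
    convert this using 1
    funext p
    simp
  ext A hA
  rw [Measure.map_apply mP hA, withDensity_apply _ (mP hA), withDensity_apply _ hA,
    ← lintegral_indicator (mP hA), ← lintegral_indicator hA,
    ← mp.lintegral_comp (hF.indicator (mP hA)), Measure.volume_eq_prod,
    lintegral_prod_symm (fun p : H × Hᗮ => Set.indicator _ F ((p.1 : Eucl n) + (p.2 : Eucl n)))
      ((hF.indicator (mP hA)).comp mp.measurable).aemeasurable]
  refine lintegral_congr fun y => ?_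
  have e : ∀ x : H, Hᗮ.orthogonalProjectionOnto ((x : Eucl n) + (y : Eucl n)) = y := by
    intro x
    have z : Hᗮ.orthogonalProjectionOnto (x : Eucl n) = 0 := by
      rw [Submodule.orthogonalProjectionOnto_eq_zero_iff]
      exact Submodule.le_orthogonal_orthogonal H x.2
    rw [map_add, Submodule.orthogonalProjectionOnto_mem_subspace_eq_self, z, zero_add]
  by_cases hy : y ∈ A
  · rw [Set.indicator_of_mem hy]
    refine lintegral_congr fun x => ?_
    rw [Set.indicator_of_mem]
    simpa [e] using hy
  · rw [Set.indicator_of_notMem hy, ← lintegral_zero (μ := (volume : Measure H))]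
    refine lintegral_congr fun x => ?_
    rw [Set.indicator_of_notMem]
    simpa [e] using hy

lemma section_bound {n : ℕ} (f : Eucl n → ℝ) (f0 : ∀ x, 0 ≤ f x) (hlc : IsLogConcave f)
    (husc : UpperSemicontinuous f) (hint : Integrable f) (h1 : (∫ x, f x) = 1)
    (hm : ∀ i : Fin n, (∫ x, f x * x i) = 0)
    (hcov : ∀ i j : Fin n, (∫ x, f x * x i * x j) = if i = j then 1 else 0)
    (H : Submodule ℝ (Eucl n)) :
    Real.exp (-Real.pi) ^ (Module.finrank ℝ Hᗮ) ≤ sectL1 f H := by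
  have fm : Measurable f := husc.measurable
  set F : Eucl n → ℝ≥0∞ := fun x => ENNReal.ofReal (f x) with hFdef
  have hF : Measurable F := by fun_prop
  set μ : Measure (Eucl n) := volume.withDensity F with hμ
  have hμ1 : IsProbabilityMeasure μ := by
    constructor
    rw [hμ, withDensity_apply _ MeasurableSet.univ, setLIntegral_univ,
      ← ofReal_integral_eq_lintegral_ofReal hint (Filter.Eventually.of_forall f0), h1]
    simp
  -- moments
  have iμ : ∀ u : Eucl n → ℝ, ∫ x, u x ∂μ = ∫ x, f x * u x := by
    intro u
    rw [hμ, integral_withDensity_eq_integral_toReal_smul hF (by simp [hFdef])]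
    refine integral_congr_ae (Filter.Eventually.of_forall fun x => ?_)
    simp [hFdef, f0 x]
  have intμ : ∀ u : Eucl n → ℝ, Integrable (fun x => f x * u x) → Integrable u μ := by
    intro u hu
    rw [hμ, integrable_withDensity_iff_integrable_smul' hF (by simp [hFdef])]
    refine hu.congr (Filter.Eventually.of_forall fun x => ?_)
    simp [hFdef, f0 x]
  have i2 : ∀ i, Integrable (fun x : Eucl n => x i ^ 2) μ := by
    intro i
    apply intμ
    refine Integrable.of_integral_ne_zero ?_
    have := hcov i i
    simp only [if_true] at this
    have e : ∀ x : Eucl n, f x * x i ^ 2 = f x * x i * x i := fun x => by ring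
    simp only [e, this]
    simp
  have mL : ∀ i, MemLp (fun x : Eucl n => x i) 2 μ := fun i =>
    (memLp_two_iff_integrable_sq (by fun_prop)).2 (i2 i)
  have ii : ∀ i, Integrable (fun x : Eucl n => x i) μ := fun i => (mL i).integrable (by norm_num)
  have iij : ∀ i j, Integrable (fun x : Eucl n => x i * x j) μ := fun i j =>
    (mL i).integrable_mul (mL j)
  have mom1 : ∀ v : Eucl n, Integrable (fun x => inner ℝ v x) μ ∧ ∫ x, inner ℝ v x ∂μ = 0 := by
    intro v
    have e : ∀ x : Eucl n, inner ℝ v x = ∑ i, v i * x i := by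
      intro x
      simp [PiLp.inner_apply, mul_comm]
    simp only [e]
    refine ⟨integrable_finsetSum _ fun i _ => (ii i).const_mul _, ?_⟩
    rw [integral_finsetSum _ fun i _ => (ii i).const_mul _]
    refine Finset.sum_eq_zero fun i _ => ?_
    rw [integral_const_mul, iμ, hm, mul_zero]
  have mom2 : ∀ v : Eucl n, Integrable (fun x => inner ℝ v x ^ 2) μ ∧
      ∫ x, inner ℝ v x ^ 2 ∂μ = ‖v‖ ^ 2 := by
    intro v
    have e : ∀ x : Eucl n, inner ℝ v x ^ 2 = ∑ i, ∑ j, (v i * v j) * (x i * x j) := by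
      intro x
      simp only [PiLp.inner_apply, pow_two, Finset.sum_mul_sum]
      refine Finset.sum_congr rfl fun i _ => Finset.sum_congr rfl fun j _ => ?_
      simp
      ring
    simp only [e]
    have I : ∀ i j, Integrable (fun x : Eucl n => (v i * v j) * (x i * x j)) μ :=
      fun i j => (iij i j).const_mul _
    refine ⟨integrable_finsetSum _ fun i _ => integrable_finsetSum _ fun j _ => I i j, ?_⟩
    rw [integral_finsetSum _ fun i _ => integrable_finsetSum _ fun j _ => I i j]
    have e3 : ∀ i j, ∫ x : Eucl n, (v i * v j) * (x i * x j) ∂μ = (v i * v j) * if i = j then 1 else 0 := by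
      intro i j
      rw [integral_const_mul, iμ, ← hcov i j]
      simp only [mul_assoc]
    have e4 : ∀ i, ∫ x : Eucl n, ∑ j, (v i * v j) * (x i * x j) ∂μ = v i ^ 2 := by
      intro i
      rw [integral_finsetSum _ fun j _ => I i j]
      simp [e3, pow_two]
    simp only [e4]
    rw [EuclideanSpace.norm_sq_eq]
    simp
  -- marginal
  set g : Hᗮ → ℝ≥0∞ := fun y => ∫⁻ x : H, F ((x : Eucl n) + (y : Eucl n)) with hg
  have hgm : Measurable g := by
    have : Measurable (fun p : Hᗮ × H => F ((p.2 : Eucl n) + (p.1 : Eucl n))) := by fun_prop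
    exact this.lintegral_prod_right'
  have hglc : LCE g := by
    refine LCE.marginal (fun p : Hᗮ × H => F ((p.2 : Eucl n) + (p.1 : Eucl n))) (by fun_prop) ?_
    intro p q t ht ht1
    have := ENNReal.ofReal_le_ofReal
      (hlc ((p.2 : Eucl n) + (p.1 : Eucl n)) ((q.2 : Eucl n) + (q.1 : Eucl n)) t ht ht1)
    rw [ENNReal.ofReal_mul (Real.rpow_nonneg (f0 _) _),
      ← ENNReal.ofReal_rpow_of_nonneg (f0 _) ht.le,
      ← ENNReal.ofReal_rpow_of_nonneg (f0 _) (sub_pos.2 ht1).le] at this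
    refine this.trans (le_of_eq ?_)
    simp only [hFdef]
    congr 2
    simp only [Prod.fst_add, Prod.snd_add, Prod.smul_fst, Prod.smul_snd, Submodule.coe_add,
      Submodule.coe_smul]
    module
  set P : Eucl n → Hᗮ := fun x => Hᗮ.orthogonalProjectionOnto x with hP
  have mP : Measurable P := by fun_prop
  have hν := marg_density F hF H
  have hνp : IsProbabilityMeasure (μ.map P) := Measure.isProbabilityMeasure_map mP.aemeasurable
  let b := stdOrthonormalBasis ℝ Hᗮ
  have innP : ∀ (w : Hᗮ) (x : Eucl n), inner ℝ w (P x) = inner ℝ (w : Eucl n) x := by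
    intro w x
    simp [hP]
  have lin : ∀ ℓ : Hᗮ →L[ℝ] ℝ, ∃ v : Eucl n, ∀ x, ℓ (P x) = inner ℝ v x := by
    intro ℓ
    refine ⟨((InnerProductSpace.toDual ℝ Hᗮ).symm ℓ : Hᗮ), fun x => ?_⟩
    rw [← innP, InnerProductSpace.toDual_symm_apply]
  have nrm : ∀ x, ‖P x‖ ^ 2 = ∑ i, inner ℝ ((b i : Hᗮ) : Eucl n) x ^ 2 := by
    intro x
    rw [← b.sum_sq_norm_inner_right (P x)]
    simp [innP]
  have C := core g hgm hglc (μ.map P) hν ?_ ?_ ?_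
  · obtain ⟨C1, C2⟩ := C
    have e : ∫ y, ‖y‖ ^ 2 ∂(μ.map P) = Module.finrank ℝ Hᗮ := by
      rw [integral_map mP.aemeasurable (by fun_prop)]
      simp only [nrm]
      rw [integral_finsetSum _ fun i _ => (mom2 _).1]
      have nb : ∀ i, ‖((b i : Hᗮ) : Eucl n)‖ = 1 := fun i => b.norm_eq_one i
      simp [(mom2 _).2, nb]
    rw [e] at C2
    have e2 : (g 0).toReal = sectL1 f H := by
      simp only [hg, sectL1, hFdef]
      rw [integral_eq_lintegral_of_nonneg_ae (Filter.Eventually.of_forall fun x => f0 _)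
        (fm.comp measurable_subtype_coe).aestronglyMeasurable]
      simp
    rw [← e2, ← Real.exp_nat_mul]
    convert C2 using 2
    ring
  · rw [integrable_map_measure (by fun_prop) mP.aemeasurable]
    have : (fun y : Hᗮ => ‖y‖ ^ 2) ∘ P = fun x => ∑ i, inner ℝ ((b i : Hᗮ) : Eucl n) x ^ 2 := by
      funext x; exact nrm x
    rw [this]
    exact integrable_finsetSum _ fun i _ => (mom2 _).1
  · intro ℓ
    obtain ⟨v, hv⟩ := lin ℓ
    rw [integrable_map_measure (by fun_prop) mP.aemeasurable]
    have : (fun y : Hᗮ => ℓ y) ∘ P = fun x => inner ℝ v x := by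
      funext x; exact hv x
    rw [this]
    exact (mom1 v).1
  · intro ℓ
    obtain ⟨v, hv⟩ := lin ℓ
    rw [integral_map mP.aemeasurable (by fun_prop)]
    simp only [hv]
    exact (mom1 v).2

/-- **Lemma 5.3, lower bound**: there is an absolute constant `C > 0` such that
every log-concave upper semicontinuous probability density in isotropic position
satisfies `∫_H f dλ_H ≥ C^{n−k}` for every `k`-dimensional subspace `H`. -/
theorem section_integral_lower_bound :
    ∃ C : ℝ, 0 < C ∧ ∀ (n k : ℕ), 1 ≤ k → k < n →
      ∀ f : Eucl n → ℝ, (∀ x, 0 ≤ f x) → IsLogConcave f →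
        UpperSemicontinuous f → Integrable f → (∫ x, f x) = 1 →
        (∀ i : Fin n, (∫ x, f x * x i) = 0) →
        (∀ i j : Fin n, (∫ x, f x * x i * x j) = if i = j then 1 else 0) →
        ∀ H : Submodule ℝ (Eucl n), Module.finrank ℝ H = k →
          C ^ (n - k) ≤ sectL1 f H := by
  refine ⟨Real.exp (-Real.pi), Real.exp_pos _, ?_⟩
  intro n k _ _ f f0 hlc husc hint h1 hm hcov H hk
  have e : Module.finrank ℝ Hᗮ = n - k := by
    have := H.finrank_add_finrank_orthogonal
    rw [hk, finrank_euclideanSpace_fin] at this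
    omega
  rw [← e]
  exact section_bound f f0 hlc husc hint h1 hm hcov H
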